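/- Let δ, p : ℝ → ℝ be bounded, continuous and almost automorphic functions with δ(t) > 0 and p(t) > 0 for all t ∈ ℝ, and suppose δ is ergodic with mean M(δ) > 0. Let τ > 0. Then there exists γ₀ > 0, depending only on δ, p and τ, such that for every 0 < γ ≤ γ₀, the delayed Lasota–Wazewska equation y'(t) = −δ(t)·y(t) + p(t)·exp(−γ·y(t−τ)) has exactly one nonnegative bounded almost automorphic differentiable solution y : ℝ → ℝ. -/

import Mathlib

open MeasureTheory Filter Topology

/-- A continuous function `ψ : ℝ → V` into a Banach space is almost automorphic if for every
sequence of reals there is a subsequence `(τₙ)` and a function `ψ̃` with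
`ψ(t+τₙ) → ψ̃(t)` and `ψ̃(t−τₙ) → ψ(t)` pointwise on `ℝ`. -/
def AlmostAutomorphic {V : Type*} [NormedAddCommGroup V] (ψ : ℝ → V) : Prop :=
  Continuous ψ ∧ ∀ σ : ℕ → ℝ, ∃ k : ℕ → ℕ, StrictMono k ∧ ∃ ψt : ℝ → V,
    (∀ t : ℝ, Tendsto (fun n => ψ (t + σ (k n))) atTop (𝓝 (ψt t))) ∧
    (∀ t : ℝ, Tendsto (fun n => ψt (t - σ (k n))) atTop (𝓝 (ψ t)))

/-- A bounded continuous function `f : ℝ → ℝ` is ergodic with mean `M` if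
`(1/(2T)) ∫_{−T+ξ}^{T+ξ} f(s) ds → M` as `T → ∞`, uniformly with respect to `ξ ∈ ℝ`. -/
def ErgodicMeanR (f : ℝ → ℝ) (M : ℝ) : Prop :=
  ∀ ε > 0, ∃ T₁ > (0 : ℝ), ∀ T ≥ T₁, ∀ ξ : ℝ,
    |(2 * T)⁻¹ * (∫ s in (-T + ξ)..(T + ξ), f s) - M| < ε

/-!
Since `δ` has positive mean, `y' = -δ y` is exponentially stable, so for bounded `f` the only
bounded solution of `y' = -δ y + f` is the variation of constants integral of `f` over `(-∞, t]`.
By dominated convergence this integral follows `δ` and `f` along limits of translates, hence it is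
almost automorphic whenever `δ` and `f` are. Freezing `exp (-γ x)` at `1` for `x < 0` changes
nothing along nonnegative functions and makes the delayed feedback `O(γ)`-Lipschitz in the sup
norm. For small `γ`, feedback followed by the integral is therefore a contraction of the space of
bounded continuous functions; it preserves the closed set of almost automorphic functions, which
therefore contains its fixed point, and the fixed point is nonnegative because the feedback is.
-/

open scoped NNReal BoundedContinuousFunction

section Translates

variable {V W : Type*} [NormedAddCommGroup V] [NormedAddCommGroup W]

/-- `ψ'` is the limit of the translates of `ψ` by `s` along the filter `l`, and `ψ` is recovered
from `ψ'` by translating back. Almost automorphy produces such limits along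
`map (σ ∘ k) atTop`; a filter in place of a sequence turns passing to a subsequence into `≤`. -/
structure TranslateLimit (l : Filter ℝ) (ψ ψ' : ℝ → V) : Prop where
  forward : ∀ t, Tendsto (fun s => ψ (t + s)) l (𝓝 (ψ' t))
  backward : ∀ t, Tendsto (fun s => ψ' (t - s)) l (𝓝 (ψ t))

namespace TranslateLimit

variable {l l' : Filter ℝ} {ψ ψ' : ℝ → V} {φ φ' : ℝ → W}

lemma mono (h : TranslateLimit l ψ ψ') (hl : l' ≤ l) : TranslateLimit l' ψ ψ' :=
  ⟨fun t => (h.forward t).mono_left hl, fun t => (h.backward t).mono_left hl⟩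

lemma prodMk (hψ : TranslateLimit l ψ ψ') (hφ : TranslateLimit l φ φ') :
    TranslateLimit l (fun t => (ψ t, φ t)) (fun t => (ψ' t, φ' t)) :=
  ⟨fun t => (hψ.forward t).prodMk_nhds (hφ.forward t),
    fun t => (hψ.backward t).prodMk_nhds (hφ.backward t)⟩

lemma continuous_comp {g : V → W} (hg : Continuous g) (h : TranslateLimit l ψ ψ') :
    TranslateLimit l (fun t => g (ψ t)) (fun t => g (ψ' t)) :=
  ⟨fun t => (hg.tendsto _).comp (h.forward t), fun t => (hg.tendsto _).comp (h.backward t)⟩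

lemma comp_sub_const (h : TranslateLimit l ψ ψ') (r : ℝ) :
    TranslateLimit l (fun t => ψ (t - r)) (fun t => ψ' (t - r)) :=
  ⟨fun t => by simpa only [sub_add_eq_add_sub] using h.forward (t - r),
    fun t => by simpa only [sub_right_comm] using h.backward (t - r)⟩

lemma exists_of_tendstoUniformly [CompleteSpace V] [NeBot l] {ψ ψ' : ℕ → ℝ → V} {φ : ℝ → V}
    (h : ∀ m, TranslateLimit l (ψ m) (ψ' m)) (hφ : TendstoUniformly ψ φ atTop) :
    ∃ φ', TranslateLimit l φ φ' := by
  have hcauchy : UniformCauchySeqOn ψ' atTop Set.univ := by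
    refine Metric.uniformCauchySeqOn_iff.2 fun ε hε => ?_
    obtain ⟨N, hN⟩ := Metric.uniformCauchySeqOn_iff.1
      (tendstoUniformlyOn_univ.2 hφ).uniformCauchySeqOn (ε / 2) (half_pos hε)
    refine ⟨N, fun m hm n hn t _ => lt_of_le_of_lt ?_ (half_lt_self hε)⟩
    exact le_of_tendsto (((h m).forward t).dist ((h n).forward t))
      (Eventually.of_forall fun s => (hN m hm n hn (t + s) trivial).le)
  choose φ' hφ' using fun t => cauchySeq_tendsto_of_complete (hcauchy.cauchySeq (Set.mem_univ t))
  have hunif : TendstoUniformly ψ' φ' atTop :=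
    tendstoUniformlyOn_univ.1 (hcauchy.tendstoUniformlyOn_of_tendsto fun t _ => hφ' t)
  exact ⟨φ',
    fun t => (hφ.comp (t + ·)).tendsto_of_eventually_tendsto
      (Eventually.of_forall fun m => (h m).forward t) (hφ' t),
    fun t => (hunif.comp (t - ·)).tendsto_of_eventually_tendsto
      (Eventually.of_forall fun m => (h m).backward t) (hφ.tendsto_at t)⟩

end TranslateLimit

lemma exists_strictMono_forall_map_atTop {p : ℕ → Filter ℕ → Prop} (hp : ∀ m, Antitone (p m))
    (hsub : ∀ m (φ : ℕ → ℕ), StrictMono φ → ∃ k : ℕ → ℕ, StrictMono k ∧ p m (map (φ ∘ k) atTop)) :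
    ∃ φ : ℕ → ℕ, StrictMono φ ∧ ∀ m, p m (map φ atTop) := by
  choose! k hk hpk using hsub
  let φ (m : ℕ) : ℕ → ℕ := Nat.rec (motive := fun _ => ℕ → ℕ) id (fun m φm => φm ∘ k m φm) m
  have hφ (m : ℕ) : StrictMono (φ m) := by
    induction m with
    | zero => exact strictMono_id
    | succ m ih => exact ih.comp (hk m _ ih)
  let l : ℕ → Filter ℕ := fun m => map (φ m) atTop
  have hl : Antitone l := antitone_nat_of_succ_le fun m =>
    map_mono (m := φ m) (hk m _ (hφ m)).tendsto_atTop
  have (m : ℕ) : (l m).IsCountablyGenerated := map.isCountablyGenerated atTop (φ m)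
  have : NeBot (⨅ m : ℕ, l m) := iInf_neBot_of_directed hl.directed_ge fun _ => map_neBot
  -- A sequence converging to the infimum of the filters of the nested subsequences is diagonal.
  obtain ⟨x, hx⟩ := exists_seq_tendsto (⨅ m : ℕ, l m)
  obtain ⟨j, hj, hxj⟩ := strictMono_subseq_of_tendsto_atTop
    (hx.mono_right ((iInf_le l 0).trans map_id.le))
  refine ⟨x ∘ j, hxj, fun m => hp m ?_ (hpk m _ (hφ m))⟩
  exact (hx.comp hj.tendsto_atTop).mono_right (iInf_le l (m + 1))

namespace AlmostAutomorphic

variable {ψ : ℝ → V} {φ : ℝ → W}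

lemma exists_translateLimit (h : AlmostAutomorphic ψ) (σ : ℕ → ℝ) :
    ∃ k : ℕ → ℕ, StrictMono k ∧ ∃ ψ', TranslateLimit (map (σ ∘ k) atTop) ψ ψ' := by
  obtain ⟨k, hk, ψ', hf, hb⟩ := h.2 σ
  exact ⟨k, hk, ψ', hf, hb⟩

lemma of_translateLimit (hc : Continuous ψ) (h : ∀ σ : ℕ → ℝ, ∃ k : ℕ → ℕ, StrictMono k ∧
    ∃ ψ', TranslateLimit (map (σ ∘ k) atTop) ψ ψ') : AlmostAutomorphic ψ := by
  refine ⟨hc, fun σ => ?_⟩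
  obtain ⟨k, hk, ψ', hf, hb⟩ := h σ
  exact ⟨k, hk, ψ', hf, hb⟩

lemma const (v : V) : AlmostAutomorphic fun _ => v :=
  of_translateLimit continuous_const fun _ =>
    ⟨id, strictMono_id, fun _ => v, fun _ => tendsto_const_nhds, fun _ => tendsto_const_nhds⟩

lemma prodMk (hψ : AlmostAutomorphic ψ) (hφ : AlmostAutomorphic φ) :
    AlmostAutomorphic fun t => (ψ t, φ t) := by
  refine of_translateLimit (hψ.1.prodMk hφ.1) fun σ => ?_
  obtain ⟨k, hk, ψ', hψ'⟩ := hψ.exists_translateLimit σ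
  obtain ⟨j, hj, φ', hφ'⟩ := hφ.exists_translateLimit (σ ∘ k)
  have hle : map (σ ∘ k ∘ j) atTop ≤ map (σ ∘ k) atTop :=
    map_mono (m := σ ∘ k) hj.tendsto_atTop
  exact ⟨k ∘ j, hk.comp hj, _, (hψ'.mono hle).prodMk hφ'⟩

lemma continuous_comp {g : V → W} (hg : Continuous g) (h : AlmostAutomorphic ψ) :
    AlmostAutomorphic fun t => g (ψ t) := by
  refine of_translateLimit (hg.comp h.1) fun σ => ?_
  obtain ⟨k, hk, ψ', hψ'⟩ := h.exists_translateLimit σ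
  exact ⟨k, hk, _, hψ'.continuous_comp hg⟩

lemma comp_sub_const (h : AlmostAutomorphic ψ) (r : ℝ) : AlmostAutomorphic fun t => ψ (t - r) := by
  refine of_translateLimit (h.1.comp (continuous_sub_right r)) fun σ => ?_
  obtain ⟨k, hk, ψ', hψ'⟩ := h.exists_translateLimit σ
  exact ⟨k, hk, _, hψ'.comp_sub_const r⟩

lemma exists_norm_le (h : AlmostAutomorphic ψ) : ∃ C, ∀ t, ‖ψ t‖ ≤ C := by
  by_contra! hunbounded
  choose σ hσ using fun n : ℕ => hunbounded n
  obtain ⟨k, hk, ψ', hψ', -⟩ := h.2 σ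
  have hlim : Tendsto (fun n => ‖ψ (σ (k n))‖) atTop (𝓝 ‖ψ' 0‖) := by
    simpa only [zero_add] using (hψ' 0).norm
  refine not_tendsto_nhds_of_tendsto_atTop (tendsto_atTop_mono (fun n => (hσ (k n)).le) ?_) _ hlim
  exact tendsto_natCast_atTop_atTop.comp hk.tendsto_atTop

lemma of_tendstoUniformly [CompleteSpace V] {ψ : ℕ → ℝ → V} {φ : ℝ → V}
    (h : ∀ m, AlmostAutomorphic (ψ m)) (hφ : TendstoUniformly ψ φ atTop) :
    AlmostAutomorphic φ := by
  refine of_translateLimit (hφ.continuous (Frequently.of_forall fun m => (h m).1)) fun σ => ?_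
  obtain ⟨k, hk, hψ'⟩ := exists_strictMono_forall_map_atTop
    (p := fun m l => ∃ ψ', TranslateLimit (map σ l) (ψ m) ψ')
    (fun m _ _ hl ⟨ψ', hψ'⟩ => ⟨ψ', hψ'.mono (map_mono hl)⟩)
    fun m φ _ => by
      simpa only [map_map, Function.comp_assoc] using (h m).exists_translateLimit (σ ∘ φ)
  choose ψ' hψ' using hψ'
  exact ⟨k, hk, TranslateLimit.exists_of_tendstoUniformly hψ' hφ⟩

lemma isClosed_setOf [CompleteSpace V] : IsClosed {f : ℝ →ᵇ V | AlmostAutomorphic f} :=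
  IsSeqClosed.isClosed fun _ _ hf hlim =>
    of_tendstoUniformly hf (BoundedContinuousFunction.tendsto_iff_tendstoUniformly.1 hlim)

end AlmostAutomorphic

end Translates

/-- The homogeneous equation `y' = -δ y` is exponentially stable: its evolution
`exp (-∫ v in s..t, δ v)` is at most `exp c * exp (-a * (t - s))` for `s ≤ t`. The rate is only
required to be measurable and bounded by `D`, since pointwise limits of translates of a continuous
rate need not be continuous. -/
structure StableRate (a c D : ℝ) (δ : ℝ → ℝ) : Prop where
  pos : 0 < a
  measurable : Measurable δ
  abs_le : ∀ t, |δ t| ≤ D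
  sub_le_integral : ∀ s t, s ≤ t → a * (t - s) - c ≤ ∫ v in s..t, δ v

/-- The integrating factor of `y' = -δ y + f`, normalised to be `1` at time `0`. -/
noncomputable def integratingFactor (δ : ℝ → ℝ) (t : ℝ) : ℝ :=
  Real.exp (∫ v in (0 : ℝ)..t, δ v)

lemma integratingFactor_pos (δ : ℝ → ℝ) (t : ℝ) : 0 < integratingFactor δ t := Real.exp_pos _

lemma hasDerivAt_integratingFactor {δ : ℝ → ℝ} (hδ : Continuous δ) (t : ℝ) :
    HasDerivAt (integratingFactor δ) (integratingFactor δ t * δ t) t :=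
  (hδ.integral_hasStrictDerivAt 0 t).hasDerivAt.exp

lemma tendsto_intervalIntegral_of_abs_le {ι : Type*} {l : Filter ι} [l.IsCountablyGenerated]
    {F : ι → ℝ → ℝ} {f : ℝ → ℝ} {D : ℝ} (hmeas : ∀ i, Measurable (F i))
    (hbound : ∀ i t, |F i t| ≤ D) (hlim : ∀ t, Tendsto (fun i => F i t) l (𝓝 (f t))) (s t : ℝ) :
    Tendsto (fun i => ∫ v in s..t, F i v) l (𝓝 (∫ v in s..t, f v)) :=
  intervalIntegral.tendsto_integral_filter_of_dominated_convergence (fun _ => D)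
    (Eventually.of_forall fun i => (hmeas i).aestronglyMeasurable)
    (Eventually.of_forall fun i => Eventually.of_forall fun v _ => hbound i v)
    intervalIntegrable_const (Eventually.of_forall fun v _ => hlim v)

lemma measurePreserving_sub_left_restrict_Ioi (t : ℝ) :
    MeasurePreserving (fun u => t - u) (volume.restrict (Set.Ioi 0))
      (volume.restrict (Set.Iic t)) := by
  have hpre : (fun u => t - u) ⁻¹' Set.Iio t = Set.Ioi 0 := by ext u; simp
  rw [← restrict_Iio_eq_restrict_Iic, ← hpre]
  exact (Measure.measurePreserving_sub_left volume t).restrict_preimage measurableSet_Iio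

namespace StableRate

variable {a c D : ℝ} {δ : ℝ → ℝ}

lemma intervalIntegrable (h : StableRate a c D δ) (s t : ℝ) :
    IntervalIntegrable δ volume s t :=
  (intervalIntegrable_const (c := D)).mono_fun' h.measurable.aestronglyMeasurable
    (Eventually.of_forall h.abs_le)

lemma comp_add_const (h : StableRate a c D δ) (r : ℝ) : StableRate a c D fun t => δ (t + r) where
  pos := h.pos
  measurable := h.measurable.comp (measurable_id.add_const r)
  abs_le t := h.abs_le (t + r)
  sub_le_integral s t hst := by
    rw [intervalIntegral.integral_comp_add_right]
    simpa only [add_sub_add_right_eq_sub] using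
      h.sub_le_integral (s + r) (t + r) (add_le_add_left hst r)

lemma of_tendsto {ι : Type*} {l : Filter ι} [NeBot l] [l.IsCountablyGenerated] {F : ι → ℝ → ℝ}
    (h : ∀ i, StableRate a c D (F i)) (hlim : ∀ t, Tendsto (fun i => F i t) l (𝓝 (δ t))) :
    StableRate a c D δ where
  pos := (h l.nonempty_of_neBot.some).pos
  measurable := measurable_of_tendsto_metrizable' l (fun i => (h i).measurable)
    (tendsto_pi_nhds.2 hlim)
  abs_le t := le_of_tendsto (hlim t).abs (Eventually.of_forall fun i => (h i).abs_le t)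
  sub_le_integral s t hst :=
    ge_of_tendsto
      (tendsto_intervalIntegral_of_abs_le (fun i => (h i).measurable) (fun i => (h i).abs_le)
        hlim s t)
      (Eventually.of_forall fun i => (h i).sub_le_integral s t hst)

lemma exp_neg_integral_le (h : StableRate a c D δ) {s t : ℝ} (hst : s ≤ t) :
    Real.exp (-∫ v in s..t, δ v) ≤ Real.exp c * Real.exp (-a * (t - s)) := by
  rw [← Real.exp_add, Real.exp_le_exp]
  linarith [h.sub_le_integral s t hst]

lemma exp_neg_integral_eq (h : StableRate a c D δ) (s t : ℝ) :
    Real.exp (-∫ v in s..t, δ v) = (integratingFactor δ t)⁻¹ * integratingFactor δ s := by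
  rw [← intervalIntegral.integral_interval_sub_left (h.intervalIntegrable 0 t)
    (h.intervalIntegrable 0 s), neg_sub, Real.exp_sub, div_eq_inv_mul]
  rfl

lemma continuous_integratingFactor (h : StableRate a c D δ) : Continuous (integratingFactor δ) :=
  Real.continuous_exp.comp (intervalIntegral.continuous_primitive h.intervalIntegrable 0)

lemma tendsto_integratingFactor_atBot (h : StableRate a c D δ) :
    Tendsto (integratingFactor δ) atBot (𝓝 0) := by
  have hexp : Tendsto (fun s : ℝ => Real.exp c * Real.exp (a * s)) atBot (𝓝 0) := by
    simpa using (Real.tendsto_exp_atBot.comp (tendsto_id.const_mul_atBot h.pos)).const_mul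
      (Real.exp c)
  refine squeeze_zero' (Eventually.of_forall fun s => (integratingFactor_pos δ s).le) ?_ hexp
  filter_upwards [eventually_le_atBot 0] with s hs
  have hle := h.exp_neg_integral_le hs
  rwa [h.exp_neg_integral_eq, show integratingFactor δ 0 = 1 by simp [integratingFactor],
    inv_one, one_mul, zero_sub, neg_mul_neg] at hle

end StableRate

section Duhamel

variable {E : Type*} [NormedAddCommGroup E] [NormedSpace ℝ E] {a c B D : ℝ} {δ : ℝ → ℝ}
  {f g : ℝ → E}

/-- The variation of constants formula `∫ s in (-∞)..t, exp (-∫ v in s..t, δ v) • f s`, which gives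
the bounded solution of `y' = -δ y + f`. It is written in the elapsed time `u = t - s`, so that the
domain of integration does not depend on `t`. -/
noncomputable def duhamel (δ : ℝ → ℝ) (f : ℝ → E) (t : ℝ) : E :=
  ∫ u in Set.Ioi 0, Real.exp (-∫ v in (t - u)..t, δ v) • f (t - u)

lemma duhamel_comp_add_const (δ : ℝ → ℝ) (f : ℝ → E) (t r : ℝ) :
    duhamel (fun t => δ (t + r)) (fun t => f (t + r)) t = duhamel δ f (t + r) := by
  simp only [duhamel, intervalIntegral.integral_comp_add_right, sub_add_eq_add_sub]

lemma duhamel_nonneg {f : ℝ → ℝ} (hf : ∀ t, 0 ≤ f t) (δ : ℝ → ℝ) (t : ℝ) : 0 ≤ duhamel δ f t :=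
  integral_nonneg fun u => mul_nonneg (Real.exp_pos _).le (hf (t - u))

namespace StableRate

lemma norm_duhamel_integrand_le (h : StableRate a c D δ) (hB : ∀ t, ‖f t‖ ≤ B) (t : ℝ) :
    ∀ᵐ u ∂volume.restrict (Set.Ioi 0),
      ‖Real.exp (-∫ v in (t - u)..t, δ v) • f (t - u)‖ ≤ Real.exp c * B * Real.exp (-a * u) := by
  refine ae_restrict_of_forall_mem measurableSet_Ioi fun u (hu : 0 < u) => ?_
  have hkernel := h.exp_neg_integral_le (sub_le_self t hu.le)
  rw [sub_sub_cancel] at hkernel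
  rw [norm_smul, Real.norm_of_nonneg (Real.exp_pos _).le, mul_right_comm]
  gcongr
  exact hB (t - u)

lemma integrableOn_majorant (h : StableRate a c D δ) (B : ℝ) :
    IntegrableOn (fun u => Real.exp c * B * Real.exp (-a * u)) (Set.Ioi 0) :=
  (exp_neg_integrableOn_Ioi 0 h.pos).const_mul _

lemma aestronglyMeasurable_duhamel_integrand (h : StableRate a c D δ) (hf : StronglyMeasurable f)
    (t : ℝ) :
    AEStronglyMeasurable (fun u => Real.exp (-∫ v in (t - u)..t, δ v) • f (t - u))
      (volume.restrict (Set.Ioi 0)) := by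
  simp only [h.exp_neg_integral_eq]
  have hkernel : Continuous fun u => (integratingFactor δ t)⁻¹ * integratingFactor δ (t - u) :=
    continuous_const.mul (h.continuous_integratingFactor.comp (continuous_sub_left t))
  exact (hkernel.stronglyMeasurable.smul
    (hf.comp_measurable (measurable_const.sub measurable_id))).aestronglyMeasurable

lemma integrableOn_duhamel_integrand (h : StableRate a c D δ) (hf : StronglyMeasurable f)
    (hB : ∀ t, ‖f t‖ ≤ B) (t : ℝ) :
    IntegrableOn (fun u => Real.exp (-∫ v in (t - u)..t, δ v) • f (t - u)) (Set.Ioi 0) :=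
  (h.integrableOn_majorant B).mono' (h.aestronglyMeasurable_duhamel_integrand hf t)
    (h.norm_duhamel_integrand_le hB t)

lemma norm_duhamel_le (h : StableRate a c D δ) (hB : ∀ t, ‖f t‖ ≤ B) (t : ℝ) :
    ‖duhamel δ f t‖ ≤ Real.exp c / a * B := by
  refine (norm_integral_le_of_norm_le (h.integrableOn_majorant B)
    (h.norm_duhamel_integrand_le hB t)).trans_eq ?_
  rw [integral_const_mul, integral_exp_mul_Ioi (neg_neg_of_pos h.pos)]
  simp only [mul_zero, Real.exp_zero, neg_div_neg_eq]
  ring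

lemma duhamel_sub (h : StableRate a c D δ) (hf : StronglyMeasurable f) (hfB : ∀ t, ‖f t‖ ≤ B)
    (hg : StronglyMeasurable g) {B' : ℝ} (hgB : ∀ t, ‖g t‖ ≤ B') (t : ℝ) :
    duhamel δ (fun s => f s - g s) t = duhamel δ f t - duhamel δ g t := by
  simp only [duhamel, smul_sub]
  exact integral_sub (h.integrableOn_duhamel_integrand hf hfB t)
    (h.integrableOn_duhamel_integrand hg hgB t)

lemma tendsto_duhamel {ι : Type*} [Nonempty ι] {l : Filter ι} [l.IsCountablyGenerated]
    {Δ : ι → ℝ → ℝ} {F : ι → ℝ → E} (h : ∀ i, StableRate a c D (Δ i))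
    (hF : ∀ i, StronglyMeasurable (F i)) (hB : ∀ i t, ‖F i t‖ ≤ B)
    (hδ : ∀ t, Tendsto (fun i => Δ i t) l (𝓝 (δ t)))
    (hf : ∀ t, Tendsto (fun i => F i t) l (𝓝 (f t))) (t : ℝ) :
    Tendsto (fun i => duhamel (Δ i) (F i) t) l (𝓝 (duhamel δ f t)) := by
  refine tendsto_integral_filter_of_dominated_convergence _
    (Eventually.of_forall fun i => (h i).aestronglyMeasurable_duhamel_integrand (hF i) t)
    (Eventually.of_forall fun i => (h i).norm_duhamel_integrand_le (hB i) t)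
    ((h (Classical.arbitrary ι)).integrableOn_majorant B) (Eventually.of_forall fun u => ?_)
  have hintegral := tendsto_intervalIntegral_of_abs_le (fun i => (h i).measurable)
    (fun i => (h i).abs_le) hδ (t - u) t
  exact ((Real.continuous_exp.tendsto _).comp hintegral.neg).smul (hf (t - u))

lemma tendsto_duhamel_add {ι : Type*} [Nonempty ι] {l : Filter ι} [l.IsCountablyGenerated]
    {σ : ι → ℝ} {δ' : ℝ → ℝ} {f' : ℝ → E} (h : StableRate a c D δ) (hfm : StronglyMeasurable f)
    (hB : ∀ t, ‖f t‖ ≤ B) (hδ : ∀ t, Tendsto (fun i => δ (t + σ i)) l (𝓝 (δ' t)))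
    (hf : ∀ t, Tendsto (fun i => f (t + σ i)) l (𝓝 (f' t))) (t : ℝ) :
    Tendsto (fun i => duhamel δ f (t + σ i)) l (𝓝 (duhamel δ' f' t)) := by
  simp only [← duhamel_comp_add_const]
  exact tendsto_duhamel (fun i => h.comp_add_const (σ i))
    (fun i => hfm.comp_measurable (measurable_id.add_const (σ i))) (fun i t => hB (t + σ i)) hδ hf t

lemma translateLimit_duhamel {l : Filter ℝ} [NeBot l] [l.IsCountablyGenerated]
    {δ' : ℝ → ℝ} {f' : ℝ → E} (h : StableRate a c D δ) (hfm : StronglyMeasurable f)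
    (hB : ∀ t, ‖f t‖ ≤ B) (hδ : TranslateLimit l δ δ') (hf : TranslateLimit l f f') :
    TranslateLimit l (duhamel δ f) (duhamel δ' f') := by
  refine ⟨h.tendsto_duhamel_add hfm hB hδ.forward hf.forward, ?_⟩
  have h' : StableRate a c D δ' := of_tendsto h.comp_add_const hδ.forward
  have hfm' : StronglyMeasurable f' := stronglyMeasurable_of_tendsto l
    (fun s => hfm.comp_measurable (measurable_id.add_const s)) (tendsto_pi_nhds.2 hf.forward)
  have hB' (t : ℝ) : ‖f' t‖ ≤ B :=
    le_of_tendsto (hf.forward t).norm (Eventually.of_forall fun s => hB (t + s))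
  exact h'.tendsto_duhamel_add (σ := fun s => -s) hfm' hB' hδ.backward hf.backward

lemma duhamel_eq_integral_Iic (h : StableRate a c D δ) (f : ℝ → E) (t : ℝ) :
    duhamel δ f t =
      (integratingFactor δ t)⁻¹ • ∫ s in Set.Iic t, integratingFactor δ s • f s := by
  simp only [duhamel, h.exp_neg_integral_eq, mul_smul]
  rw [integral_smul]
  congr 1
  exact (measurePreserving_sub_left_restrict_Ioi t).integral_comp
    (MeasurableEquiv.subLeft t).measurableEmbedding fun s => integratingFactor δ s • f s

lemma integrableOn_integratingFactor_smul (h : StableRate a c D δ) (hf : StronglyMeasurable f)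
    (hB : ∀ t, ‖f t‖ ≤ B) (t : ℝ) :
    IntegrableOn (fun s => integratingFactor δ s • f s) (Set.Iic t) := by
  have hint := h.integrableOn_duhamel_integrand hf hB t
  simp only [h.exp_neg_integral_eq, mul_smul] at hint
  have hint' := (integrable_smul_iff (inv_ne_zero (integratingFactor_pos δ t).ne') _).1 hint
  exact ((measurePreserving_sub_left_restrict_Ioi t).integrable_comp_emb
    (MeasurableEquiv.subLeft t).measurableEmbedding).1 hint'

variable [CompleteSpace E]

lemma hasDerivAt_duhamel (h : StableRate a c D δ) (hδ : Continuous δ) (hf : Continuous f)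
    (hB : ∀ t, ‖f t‖ ≤ B) (t : ℝ) :
    HasDerivAt (duhamel δ f) (-δ t • duhamel δ f t + f t) t := by
  set μ := integratingFactor δ
  have hμ : μ t ≠ 0 := (integratingFactor_pos δ t).ne'
  have hint := h.integrableOn_integratingFactor_smul hf.stronglyMeasurable hB
  have hsplit (t : ℝ) : ∫ s in Set.Iic t, μ s • f s =
      (∫ s in Set.Iic 0, μ s • f s) + ∫ s in (0 : ℝ)..t, μ s • f s := by
    rw [← intervalIntegral.integral_Iic_sub_Iic (hint 0) (hint t), add_sub_cancel]
  have hprimitive : HasDerivAt (fun t => ∫ s in Set.Iic t, μ s • f s) (μ t • f t) t := by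
    rw [funext hsplit]
    exact ((h.continuous_integratingFactor.smul hf).integral_hasStrictDerivAt 0 t).hasDerivAt
      |>.const_add _
  have hderiv := ((hasDerivAt_integratingFactor hδ t).inv hμ).smul hprimitive
  rw [funext (h.duhamel_eq_integral_Iic f)]
  refine hderiv.congr_deriv ?_
  rw [smul_smul, smul_smul, Pi.inv_apply, inv_mul_cancel₀ hμ, one_smul, add_comm]
  congr 2
  field_simp

lemma eq_duhamel_of_hasDerivAt (h : StableRate a c D δ) (hδ : Continuous δ)
    (hf : StronglyMeasurable f) (hB : ∀ t, ‖f t‖ ≤ B) {y : ℝ → E} {C : ℝ} (hy : ∀ t, ‖y t‖ ≤ C)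
    (hderiv : ∀ t, HasDerivAt y (-δ t • y t + f t) t) : y = duhamel δ f := by
  set μ := integratingFactor δ
  have hμy (t : ℝ) : HasDerivAt (fun t => μ t • y t) (μ t • f t) t := by
    refine ((hasDerivAt_integratingFactor hδ t).smul (hderiv t)).congr_deriv ?_
    module
  have hlim : Tendsto (fun t => μ t • y t) atBot (𝓝 0) :=
    h.tendsto_integratingFactor_atBot.zero_smul_isBoundedUnder_le
      (isBoundedUnder_of ⟨C, hy⟩)
  funext t
  rw [h.duhamel_eq_integral_Iic, integral_Iic_of_hasDerivAt_of_tendsto' (fun s _ => hμy s)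
    (h.integrableOn_integratingFactor_smul hf hB t) hlim, sub_zero,
    inv_smul_smul₀ (integratingFactor_pos δ t).ne']

end StableRate

lemma AlmostAutomorphic.duhamel [CompleteSpace E] (h : StableRate a c D δ)
    (hδ : AlmostAutomorphic δ) (hf : AlmostAutomorphic f) : AlmostAutomorphic (duhamel δ f) := by
  obtain ⟨B, hB⟩ := hf.exists_norm_le
  refine of_translateLimit (continuous_iff_continuousAt.2 fun t =>
    (h.hasDerivAt_duhamel hδ.1 hf.1 hB t).continuousAt) fun σ => ?_
  obtain ⟨k, hk, ψ', hψ'⟩ := (hδ.prodMk hf).exists_translateLimit σ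
  have hδ' : TranslateLimit _ δ fun t => (ψ' t).1 := hψ'.continuous_comp continuous_fst
  have hf' : TranslateLimit _ f fun t => (ψ' t).2 := hψ'.continuous_comp continuous_snd
  exact ⟨k, hk, _, h.translateLimit_duhamel hf.1.stronglyMeasurable hB hδ' hf'⟩

end Duhamel

section Contraction

variable {E : Type*} [NormedAddCommGroup E] [NormedSpace ℝ E] [CompleteSpace E]
  {a c D : ℝ} {δ : ℝ → ℝ}

namespace StableRate

/-- `duhamel δ` as an operator on bounded continuous functions. -/
noncomputable def boundedDuhamel (h : StableRate a c D δ) (hδ : Continuous δ) (f : ℝ →ᵇ E) :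
    ℝ →ᵇ E :=
  .ofNormedAddCommGroup (duhamel δ f)
    (continuous_iff_continuousAt.2 fun t =>
      (h.hasDerivAt_duhamel hδ f.continuous f.norm_coe_le_norm t).continuousAt)
    (Real.exp c / a * ‖f‖) (h.norm_duhamel_le f.norm_coe_le_norm)

lemma dist_boundedDuhamel_le (h : StableRate a c D δ) (hδ : Continuous δ) (f g : ℝ →ᵇ E) :
    dist (h.boundedDuhamel hδ f) (h.boundedDuhamel hδ g) ≤ Real.exp c / a * dist f g := by
  have hK : 0 ≤ Real.exp c / a := div_nonneg (Real.exp_pos c).le h.pos.le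
  refine (BoundedContinuousFunction.dist_le (mul_nonneg hK dist_nonneg)).2 fun t => ?_
  have hsub := h.duhamel_sub f.continuous.stronglyMeasurable f.norm_coe_le_norm
    g.continuous.stronglyMeasurable g.norm_coe_le_norm t
  rw [dist_eq_norm, dist_eq_norm]
  exact hsub ▸ h.norm_duhamel_le (f - g).norm_coe_le_norm t

lemma isFixedPt_boundedDuhamel_iff (h : StableRate a c D δ) (hδ : Continuous δ)
    (N : (ℝ →ᵇ E) → ℝ →ᵇ E) (y : ℝ →ᵇ E) :
    Function.IsFixedPt (h.boundedDuhamel hδ ∘ N) y ↔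
      ∀ t, HasDerivAt y (-δ t • y t + N y t) t := by
  constructor
  · intro hy t
    have hcoe : duhamel δ (N y) = y := congrArg DFunLike.coe hy
    have hderiv := h.hasDerivAt_duhamel hδ (N y).continuous (N y).norm_coe_le_norm t
    rwa [hcoe] at hderiv
  · intro hy
    exact DFunLike.coe_injective (h.eq_duhamel_of_hasDerivAt hδ (N y).continuous.stronglyMeasurable
      (N y).norm_coe_le_norm y.norm_coe_le_norm hy).symm

theorem exists_almostAutomorphic_forall_hasDerivAt_iff_eq (h : StableRate a c D δ)
    (hδ : AlmostAutomorphic δ) {N : (ℝ →ᵇ E) → ℝ →ᵇ E} {L : ℝ≥0} (hN : LipschitzWith L N)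
    (hNaa : ∀ y : ℝ →ᵇ E, AlmostAutomorphic y → AlmostAutomorphic (N y))
    (hL : Real.exp c / a * L < 1) :
    ∃ y : ℝ →ᵇ E, AlmostAutomorphic y ∧
      ∀ z : ℝ →ᵇ E, (∀ t, HasDerivAt z (-δ t • z t + N z t) t) ↔ z = y := by
  have hK : 0 ≤ Real.exp c / a := div_nonneg (Real.exp_pos c).le h.pos.le
  have hcontr : ContractingWith (⟨Real.exp c / a, hK⟩ * L) (h.boundedDuhamel hδ.1 ∘ N) :=
    ⟨NNReal.coe_lt_coe.1 hL,
      (LipschitzWith.of_dist_le_mul (h.dist_boundedDuhamel_le hδ.1)).comp hN⟩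
  refine ⟨hcontr.fixedPoint, ?_, fun z => ?_⟩
  · refine AlmostAutomorphic.isClosed_setOf.mem_of_tendsto (hcontr.tendsto_iterate_fixedPoint 0)
      (Eventually.of_forall fun n => ?_)
    induction n with
    | zero => exact AlmostAutomorphic.const 0
    | succ n ih =>
      rw [Function.iterate_succ_apply']
      exact AlmostAutomorphic.duhamel h hδ (hNaa _ ih)
  · rw [← h.isFixedPt_boundedDuhamel_iff hδ.1]
    exact ⟨hcontr.fixedPoint_unique, fun hz => hz ▸ hcontr.fixedPoint_isFixedPt⟩

end StableRate

end Contraction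

lemma ErgodicMeanR.exists_stableRate {δ : ℝ → ℝ} {M D : ℝ} (hM : ErgodicMeanR δ M) (hMpos : 0 < M)
    (hδ : Measurable δ) (hD : ∀ t, |δ t| ≤ D) : ∃ c, StableRate (M / 2) c D δ := by
  obtain ⟨T, hT, hmean⟩ := hM (M / 2) (half_pos hMpos)
  have hD0 : 0 ≤ D := (abs_nonneg _).trans (hD 0)
  -- On an interval no longer than `2 * T` the mean says nothing; there `c` has to absorb both
  -- `M / 2 * (2 * T)` and the trivial lower bound `-D * (2 * T)` of the integral.
  refine ⟨(M + 2 * D) * T, half_pos hMpos, hδ, hD, fun s t hst => ?_⟩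
  rcases le_total (2 * T) (t - s) with hlong | hshort
  · have hpos : 0 < t - s := (mul_pos two_pos hT).trans_le hlong
    have haverage := (abs_lt.1 (hmean ((t - s) / 2) (by linarith) ((t + s) / 2))).1
    rw [show -((t - s) / 2) + (t + s) / 2 = s by ring, show (t - s) / 2 + (t + s) / 2 = t by ring,
      mul_div_cancel₀ _ two_ne_zero] at haverage
    have hlower : M / 2 ≤ (t - s)⁻¹ * ∫ v in s..t, δ v := by linarith
    rw [inv_mul_eq_div, le_div_iff₀ hpos] at hlower
    have hc : 0 ≤ (M + 2 * D) * T := by positivity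
    linarith
  · have hnorm : |∫ v in s..t, δ v| ≤ D * (t - s) := by
      have hle := intervalIntegral.norm_integral_le_of_norm_le_const (f := δ) (a := s) (b := t)
        fun v _ => hD v
      rwa [Real.norm_eq_abs, abs_of_nonneg (sub_nonneg.2 hst)] at hle
    have hshort' : (M / 2 + D) * (t - s) ≤ (M / 2 + D) * (2 * T) := by gcongr
    linarith [(abs_le.1 hnorm).1]

/-- The nonlinearity `y ↦ p(t) φ(y(t - τ))`, for Lipschitz `φ`, as an operator on bounded continuous
functions. -/
noncomputable def delayedFeedback (p : ℝ →ᵇ ℝ) {φ : ℝ → ℝ} {L : ℝ≥0} (hφ : LipschitzWith L φ)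
    (τ : ℝ) (y : ℝ →ᵇ ℝ) : ℝ →ᵇ ℝ :=
  p • (y.compContinuous ⟨fun t => t - τ, continuous_sub_right τ⟩).comp φ hφ

section DelayedFeedback

variable (p : ℝ →ᵇ ℝ) {φ : ℝ → ℝ} {L : ℝ≥0} (hφ : LipschitzWith L φ) (τ : ℝ)

lemma delayedFeedback_apply (y : ℝ →ᵇ ℝ) (t : ℝ) :
    delayedFeedback p hφ τ y t = p t * φ (y (t - τ)) := rfl

lemma lipschitzWith_delayedFeedback : LipschitzWith (‖p‖₊ * L) (delayedFeedback p hφ τ) := by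
  have hcomp := (lipschitzWith_smul p).comp ((BoundedContinuousFunction.lipschitz_comp hφ).comp
    (BoundedContinuousFunction.lipschitz_compContinuous ⟨fun t => t - τ, continuous_sub_right τ⟩))
  rwa [mul_one] at hcomp

variable {p} in
lemma AlmostAutomorphic.delayedFeedback (hp : AlmostAutomorphic p) {y : ℝ →ᵇ ℝ}
    (hy : AlmostAutomorphic y) : AlmostAutomorphic (delayedFeedback p hφ τ y) :=
  (hp.prodMk ((hy.comp_sub_const τ).continuous_comp hφ.continuous)).continuous_comp
    (g := fun q : ℝ × ℝ => q.1 * q.2) continuous_mul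

end DelayedFeedback

/-- The response `x ↦ exp (-γ x)`, frozen at its value `1` for negative `x`, which makes it globally
Lipschitz without changing it along nonnegative solutions. -/
noncomputable def truncatedResponse (γ x : ℝ) : ℝ := Real.exp (-γ * max x 0)

lemma lipschitzWith_truncatedResponse (γ : ℝ≥0) : LipschitzWith γ (truncatedResponse γ) := by
  refine LipschitzWith.of_le_add_mul γ fun (x y : ℝ) => ?_
  set u : ℝ := max x 0
  set v : ℝ := max y 0
  have hclip : |v - u| ≤ |x - y| := by
    rw [abs_sub_comm]
    exact abs_max_sub_max_le_abs x y 0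
  have hle_one : Real.exp (-γ * u) ≤ 1 :=
    Real.exp_le_one_iff.2 (by nlinarith [γ.coe_nonneg, le_max_right x 0])
  have htangent : 1 - γ * (v - u) ≤ Real.exp (-γ * (v - u)) := by
    linarith [Real.add_one_le_exp (-γ * (v - u))]
  calc Real.exp (-γ * u)
      = Real.exp (-γ * u) * (1 - γ * (v - u)) + Real.exp (-γ * u) * (γ * (v - u)) := by ring
    _ ≤ Real.exp (-γ * u) * Real.exp (-γ * (v - u)) + Real.exp (-γ * u) * (γ * |v - u|) := by
        gcongr
        exact le_abs_self _
    _ ≤ Real.exp (-γ * u) * Real.exp (-γ * (v - u)) + 1 * (γ * |v - u|) := by gcongr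
    _ ≤ Real.exp (-γ * v) + γ * dist x y := by
        rw [← Real.exp_add, ← mul_add, add_sub_cancel, one_mul, Real.dist_eq]
        gcongr

lemma truncatedResponse_of_nonneg (γ : ℝ) {x : ℝ} (hx : 0 ≤ x) :
    truncatedResponse γ x = Real.exp (-γ * x) := by
  rw [truncatedResponse, max_eq_left hx]

theorem StableRate.exists_lasotaWazewska_solution_iff_eq {a c D : ℝ} {δ : ℝ → ℝ}
    (h : StableRate a c D δ) (hδ : AlmostAutomorphic δ) {p : ℝ →ᵇ ℝ} (hp : AlmostAutomorphic p)
    (hp0 : ∀ t, 0 ≤ p t) (τ : ℝ) {γ : ℝ≥0} (hγ : Real.exp c / a * (‖p‖ * γ) < 1) :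
    ∃ y : ℝ → ℝ, AlmostAutomorphic y ∧ ∀ z : ℝ → ℝ,
      ((∀ t, 0 ≤ z t) ∧ (∃ C, ∀ t, |z t| ≤ C) ∧
        ∀ t, HasDerivAt z (-δ t * z t + p t * Real.exp (-γ * z (t - τ))) t) ↔ z = y := by
  have hφ := lipschitzWith_truncatedResponse γ
  set N := delayedFeedback p hφ τ
  obtain ⟨y, hyaa, hy⟩ := h.exists_almostAutomorphic_forall_hasDerivAt_iff_eq hδ
    (lipschitzWith_delayedFeedback p hφ τ) (fun _ => AlmostAutomorphic.delayedFeedback hφ τ hp) hγ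
  have hN {z : ℝ →ᵇ ℝ} (hz : ∀ t, 0 ≤ z t) (t : ℝ) :
      N z t = p t * Real.exp (-γ * z (t - τ)) := by
    rw [delayedFeedback_apply, truncatedResponse_of_nonneg _ (hz _)]
  have hy0 (t : ℝ) : 0 ≤ y t := by
    rw [h.eq_duhamel_of_hasDerivAt hδ.1 (N y).continuous.stronglyMeasurable
      (N y).norm_coe_le_norm y.norm_coe_le_norm ((hy y).2 rfl)]
    exact duhamel_nonneg (fun s => mul_nonneg (hp0 s) (Real.exp_pos _).le) δ t
  refine ⟨y, hyaa, fun z => ⟨fun ⟨hz0, ⟨C, hC⟩, hz⟩ => ?_, ?_⟩⟩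
  · let z' : ℝ →ᵇ ℝ := .ofNormedAddCommGroup z
      (continuous_iff_continuousAt.2 fun t => (hz t).continuousAt) C hC
    exact congrArg DFunLike.coe ((hy z').1 fun t => (hN (z := z') hz0 t).symm ▸ hz t)
  · rintro rfl
    exact ⟨hy0, ⟨‖y‖, y.norm_coe_le_norm⟩, fun t => hN hy0 t ▸ (hy y).2 rfl t⟩

theorem delayed_lasota_wazewska_unique_almost_automorphic_solution_general {δ p : ℝ → ℝ}
    (hδ : AlmostAutomorphic δ) (hp : AlmostAutomorphic p) (hp0 : ∀ t, 0 ≤ p t) {M : ℝ}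
    (hM : ErgodicMeanR δ M) (hMpos : 0 < M) :
    ∃ γ₀ > (0 : ℝ), ∀ τ γ : ℝ, 0 ≤ γ → γ ≤ γ₀ →
      ∃ y : ℝ → ℝ, AlmostAutomorphic y ∧ ∀ z : ℝ → ℝ,
        ((∀ t, 0 ≤ z t) ∧ (∃ C, ∀ t, |z t| ≤ C) ∧
          ∀ t, HasDerivAt z (-δ t * z t + p t * Real.exp (-γ * z (t - τ))) t) ↔ z = y := by
  obtain ⟨D, hD⟩ := hδ.exists_norm_le
  obtain ⟨P, hP⟩ := hp.exists_norm_le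
  obtain ⟨c, hstable⟩ := hM.exists_stableRate hMpos hδ.1.measurable hD
  let p' : ℝ →ᵇ ℝ := .ofNormedAddCommGroup p hp.1 P hP
  set κ := Real.exp c / (M / 2) * ‖p'‖
  have hκ : 0 < κ + 1 := add_pos_of_nonneg_of_pos (by positivity) one_pos
  refine ⟨(κ + 1)⁻¹, inv_pos.2 hκ, fun τ γ hγ hγle => ?_⟩
  lift γ to ℝ≥0 using hγ
  refine hstable.exists_lasotaWazewska_solution_iff_eq hδ (p := p') hp hp0 τ ?_
  calc Real.exp c / (M / 2) * (‖p'‖ * γ) = κ * γ := (mul_assoc _ _ _).symm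
    _ ≤ κ * (κ + 1)⁻¹ := by gcongr
    _ < 1 := by rw [← div_eq_mul_inv, div_lt_one hκ]; exact lt_add_one κ

theorem delayed_lasota_wazewska_unique_almost_automorphic_solution
    (δ p : ℝ → ℝ)
    (hδc : Continuous δ) (hδb : ∃ C, ∀ t, |δ t| ≤ C) (hδaa : AlmostAutomorphic δ)
    (hpc : Continuous p) (hpb : ∃ C, ∀ t, |p t| ≤ C) (hpaa : AlmostAutomorphic p)
    (hδpos : ∀ t : ℝ, 0 < δ t) (hppos : ∀ t : ℝ, 0 < p t)
    (M : ℝ) (hM : ErgodicMeanR δ M) (hMpos : 0 < M)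
    (τ : ℝ) (hτ : 0 < τ) :
    ∃ γ₀ > (0 : ℝ), ∀ γ : ℝ, 0 < γ → γ ≤ γ₀ →
      ∃! y : ℝ → ℝ,
        AlmostAutomorphic y ∧
        (∀ t : ℝ, 0 ≤ y t) ∧
        (∃ C, ∀ t : ℝ, |y t| ≤ C) ∧
        (∀ t : ℝ, HasDerivAt y (-δ t * y t + p t * Real.exp (-γ * y (t - τ))) t) := by
  obtain ⟨γ₀, hγ₀, h⟩ := delayed_lasota_wazewska_unique_almost_automorphic_solution_general
    hδaa hpaa (fun t => (hppos t).le) hM hMpos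
  exact ⟨γ₀, hγ₀, fun γ hγ hγle =>
    let ⟨y, hy, hiff⟩ := h τ γ hγ.le hγle
    ⟨y, ⟨hy, (hiff y).2 rfl⟩, fun z hz => (hiff z).1 hz.2⟩⟩
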